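/- Under the point-mass contaminated model F = (1−ε)F₀ + ε δ_{K e₁} with 1/3 ≤ ε < 1/2 and A > 3/2, the kurtosis of the projection ⟨u, x⟩ under F, as u ranges over unit vectors of ℝ^p, attains its minimum exactly at the vectors u with u₁² = 1 (i.e., u = e₁ or u = −e₁); that is, the direction of the contamination minimizes the kurtosis of the projections. -/

import Mathlib

open MeasureTheory
open scoped RealInnerProductSpace ENNReal

/-!
All projections onto unit vectors have the same distribution under a rotation invariant law, so
contamination at a point changes the kurtosis of a projection only through the squared standardized
distance `s` of the projected point from the mean. Let `w = 1 / (1 + ε s)` be the share of the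
contaminated variance which is not due to the displacement of the point mass. Up to the factor
`1 / (1 - ε)`, the contaminated kurtosis is the quadratic in `w` with Bernstein coefficients
`1 / ε - 3 + 3 ε`, `3 ε` and `κ`, where `κ` is the uncontaminated kurtosis. These coefficients
increase exactly when `1 / 3 ≤ ε` and `3 ε ≤ κ`. The kurtosis then increases with `w`, that is,
decreases with `s`, and `s` is largest in the direction of the contamination.
-/

section Moments

open ProbabilityTheory

variable {Ω Ω' : Type*} [MeasurableSpace Ω] [MeasurableSpace Ω'] {μ : Measure Ω} {ν : Measure Ω'}
  {X : Ω → ℝ} {Y : Ω' → ℝ} {n : ℕ}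

/-- The kurtosis of a real random variable: its fourth central moment divided by the square of its
variance (not the excess kurtosis). It is `0` when the variance vanishes. -/
noncomputable def kurtosis (X : Ω → ℝ) (μ : Measure Ω) : ℝ :=
  centralMoment X 4 μ / centralMoment X 2 μ ^ 2

theorem centralMoment_two_nonneg : 0 ≤ centralMoment X 2 μ :=
  integral_nonneg fun _ ↦ sq_nonneg _

theorem centralMoment_eq_moment_of_integral_eq_zero (hX : ∫ x, X x ∂μ = 0) :
    centralMoment X n μ = moment X n μ := by
  simp [centralMoment, moment, hX]

theorem centralMoment_eq_of_identDistrib (h : IdentDistrib X Y μ ν) :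
    centralMoment X n μ = centralMoment Y n ν := by
  unfold centralMoment
  rw [h.integral_eq]
  exact (h.comp (u := fun x ↦ (x - ∫ y, Y y ∂ν) ^ n) (by fun_prop)).integral_eq

theorem centralMoment_neg_of_odd (hn : Odd n) :
    centralMoment (-X) n μ = -centralMoment X n μ := by
  rw [centralMoment, centralMoment, ← integral_neg]
  simp only [Pi.pow_apply, Pi.sub_apply, Pi.neg_apply, integral_neg, ← hn.neg_pow, neg_sub_neg,
    neg_sub]

theorem integral_eq_zero_of_identDistrib_neg (h : IdentDistrib X (-X) μ μ) :
    ∫ x, X x ∂μ = 0 := by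
  have hneg : ∫ x, X x ∂μ = -∫ x, X x ∂μ := h.integral_eq.trans (integral_neg X)
  linarith

theorem centralMoment_eq_zero_of_identDistrib_neg (h : IdentDistrib X (-X) μ μ) (hn : Odd n) :
    centralMoment X n μ = 0 := by
  have hneg := (centralMoment_eq_of_identDistrib (n := n) h).trans (centralMoment_neg_of_odd hn)
  linarith

theorem integrable_pow_of_memLp [IsFiniteMeasure μ] (hX : MemLp X n μ) {k : ℕ} (hk : k ≤ n) :
    Integrable (fun x ↦ X x ^ k) μ := by
  have hXk : MemLp X k μ := hX.mono_exponent (by exact_mod_cast hk)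
  refine (integrable_norm_iff (hX.aestronglyMeasurable.pow k)).1 ?_
  simpa only [Pi.pow_apply, norm_pow] using hXk.integrable_norm_pow'

theorem integral_sub_const_pow [IsFiniteMeasure μ] (hX : MemLp X n μ) (c : ℝ) :
    ∫ x, (X x - c) ^ n ∂μ = ∑ k ∈ Finset.range (n + 1),
      centralMoment X k μ * (∫ x, X x ∂μ - c) ^ (n - k) * n.choose k := by
  set m := ∫ x, X x ∂μ with hm
  have hint : ∀ k ∈ Finset.range (n + 1),
      Integrable (fun x ↦ (X x - m) ^ k * (m - c) ^ (n - k) * n.choose k) μ := fun k hk ↦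
    ((integrable_pow_of_memLp (hX.sub (memLp_const m)) (Finset.mem_range_succ_iff.1 hk)).mul_const
      _).mul_const _
  calc ∫ x, (X x - c) ^ n ∂μ
      = ∫ x, ∑ k ∈ Finset.range (n + 1),
          (X x - m) ^ k * (m - c) ^ (n - k) * n.choose k ∂μ := by
        simp_rw [← add_pow, sub_add_sub_cancel]
    _ = ∑ k ∈ Finset.range (n + 1), centralMoment X k μ * (m - c) ^ (n - k) * n.choose k := by
        rw [integral_finsetSum _ hint]
        simp only [integral_mul_const, centralMoment, Pi.pow_apply, Pi.sub_apply, ← hm]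

end Moments

section Contamination

open ProbabilityTheory

variable {Ω : Type*} [MeasurableSpace Ω] {μ : Measure Ω} {X : Ω → ℝ} {ε : ℝ}

/-- The point-mass contamination model `(1 - ε) μ + ε δ_a`, meaningful for `0 ≤ ε ≤ 1`. -/
noncomputable def pointContamination (μ : Measure Ω) (ε : ℝ) (a : Ω) : Measure Ω :=
  ENNReal.ofReal (1 - ε) • μ + ENNReal.ofReal ε • Measure.dirac a

theorem integral_pointContamination [MeasurableSingletonClass Ω] (hε₀ : 0 ≤ ε) (hε₁ : ε ≤ 1)
    (a : Ω) {f : Ω → ℝ} (hf : Integrable f μ) :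
    ∫ x, f x ∂pointContamination μ ε a = (1 - ε) * ∫ x, f x ∂μ + ε * f a := by
  rw [pointContamination, integral_add_measure (hf.smul_measure ENNReal.ofReal_ne_top)
    ((integrable_dirac (by simp)).smul_measure ENNReal.ofReal_ne_top),
    integral_smul_measure, integral_smul_measure, integral_dirac,
    ENNReal.toReal_ofReal hε₀, ENNReal.toReal_ofReal (sub_nonneg.2 hε₁), smul_eq_mul, smul_eq_mul]

theorem centralMoment_pointContamination [MeasurableSingletonClass Ω] [IsProbabilityMeasure μ]
    {n : ℕ} (hn : 1 ≤ n) (hX : MemLp X n μ) (hε₀ : 0 ≤ ε) (hε₁ : ε ≤ 1) (a : Ω) :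
    centralMoment X n (pointContamination μ ε a) =
      (1 - ε) * ∑ k ∈ Finset.range (n + 1),
        centralMoment X k μ * (-(ε * (X a - ∫ x, X x ∂μ))) ^ (n - k) * n.choose k +
      ε * ((1 - ε) * (X a - ∫ x, X x ∂μ)) ^ n := by
  set m := ∫ x, X x ∂μ with hm
  have hmean : ∫ x, X x ∂pointContamination μ ε a = m + ε * (X a - m) := by
    rw [integral_pointContamination hε₀ hε₁ a (hX.integrable (by exact_mod_cast hn))]
    ring
  have hpow : Integrable (fun x ↦ (X x - (m + ε * (X a - m))) ^ n) μ :=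
    integrable_pow_of_memLp (hX.sub (memLp_const _)) le_rfl
  calc centralMoment X n (pointContamination μ ε a)
      = ∫ x, (X x - (m + ε * (X a - m))) ^ n ∂pointContamination μ ε a := by
        simp only [centralMoment, Pi.pow_apply, Pi.sub_apply, hmean]
    _ = _ := by
        rw [integral_pointContamination hε₀ hε₁ a hpow, integral_sub_const_pow hX, ← hm,
          sub_add_cancel_left, show X a - (m + ε * (X a - m)) = (1 - ε) * (X a - m) by ring]

theorem centralMoment_two_pointContamination [MeasurableSingletonClass Ω]
    [IsProbabilityMeasure μ] (hX : MemLp X 2 μ) (hε₀ : 0 ≤ ε) (hε₁ : ε ≤ 1) (a : Ω) :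
    centralMoment X 2 (pointContamination μ ε a) =
      (1 - ε) * (centralMoment X 2 μ + ε * (X a - ∫ x, X x ∂μ) ^ 2) := by
  have hcm₀ : centralMoment X 0 μ = 1 := by simp [centralMoment]
  rw [centralMoment_pointContamination one_le_two hX hε₀ hε₁]
  simp only [Nat.reduceAdd, Finset.sum_range_succ, Finset.sum_range_zero, hcm₀, centralMoment_one]
  norm_num
  ring

theorem centralMoment_four_pointContamination [MeasurableSingletonClass Ω]
    [IsProbabilityMeasure μ] (hX : MemLp X 4 μ) (hε₀ : 0 ≤ ε) (hε₁ : ε ≤ 1) (a : Ω) :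
    centralMoment X 4 (pointContamination μ ε a) =
      (1 - ε) * (centralMoment X 4 μ - 4 * ε * (X a - ∫ x, X x ∂μ) * centralMoment X 3 μ +
        6 * ε ^ 2 * (X a - ∫ x, X x ∂μ) ^ 2 * centralMoment X 2 μ +
        ε * ((1 - ε) ^ 3 + ε ^ 3) * (X a - ∫ x, X x ∂μ) ^ 4) := by
  have hcm₀ : centralMoment X 0 μ = 1 := by simp [centralMoment]
  rw [centralMoment_pointContamination (by norm_num) hX hε₀ hε₁]
  simp only [Nat.reduceAdd, Finset.sum_range_succ, Finset.sum_range_zero, hcm₀, centralMoment_one,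
    show Nat.choose 4 2 = 6 from rfl]
  norm_num
  ring

/-- The kurtosis after contamination with weight `ε ≠ 0` of a variable with kurtosis `κ`, variance
`v` and vanishing third central moment, where `s = d² / v` and `d` is the distance of the
contaminating value from the mean. The share `w = v / (v + ε d²)` is the argument in which the
formula is a quadratic in Bernstein form. -/
noncomputable def contaminatedKurtosis (κ ε s : ℝ) : ℝ :=
  let w := 1 / (1 + ε * s)
  (κ * w ^ 2 + 2 * (3 * ε) * w * (1 - w) + (1 / ε - 3 + 3 * ε) * (1 - w) ^ 2) / (1 - ε)

theorem kurtosis_pointContamination [MeasurableSingletonClass Ω] [IsProbabilityMeasure μ]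
    (hX : MemLp X 4 μ) (hX₂ : centralMoment X 2 μ ≠ 0) (hX₃ : centralMoment X 3 μ = 0)
    (hε₀ : 0 < ε) (hε₁ : ε < 1) (a : Ω) :
    kurtosis X (pointContamination μ ε a) = contaminatedKurtosis (kurtosis X μ) ε
      ((X a - ∫ x, X x ∂μ) ^ 2 / centralMoment X 2 μ) := by
  set d := X a - ∫ x, X x ∂μ with hd_def
  set v := centralMoment X 2 μ with hv_def
  have hv : 0 < v := lt_of_le_of_ne centralMoment_two_nonneg hX₂.symm
  have hw : 1 / (1 + ε * (d ^ 2 / v)) = v / (v + ε * d ^ 2) := by field_simp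
  have hw' : 1 - v / (v + ε * d ^ 2) = ε * d ^ 2 / (v + ε * d ^ 2) := by field_simp; ring
  have hε₁' : 1 - ε ≠ 0 := (sub_pos.2 hε₁).ne'
  rw [kurtosis, centralMoment_two_pointContamination (hX.mono_exponent (by norm_num)) hε₀.le hε₁.le,
    centralMoment_four_pointContamination hX hε₀.le hε₁.le, hX₃]
  simp only [contaminatedKurtosis, kurtosis, hw, hw', ← hv_def, ← hd_def]
  field_simp
  ring

theorem strictMonoOn_bernstein_quadratic {a b c : ℝ} (hcb : c ≤ b) (hba : b < a) :
    StrictMonoOn (fun w ↦ a * w ^ 2 + 2 * b * w * (1 - w) + c * (1 - w) ^ 2) (Set.Icc 0 1) := by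
  rintro s ⟨hs, -⟩ t ⟨-, ht⟩ hst
  rw [← sub_pos]
  calc 0 < (t - s) * ((a - b) * (s + t) + (b - c) * ((1 - s) + (1 - t))) :=
        mul_pos (sub_pos.2 hst) <| add_pos_of_pos_of_nonneg
          (mul_pos (sub_pos.2 hba) (by linarith)) (mul_nonneg (sub_nonneg.2 hcb) (by linarith))
    _ = _ := by ring

theorem strictAntiOn_contaminatedKurtosis {κ : ℝ} (hε : 1 / 3 ≤ ε) (hε₁ : ε < 1)
    (hκ : 3 * ε < κ) : StrictAntiOn (contaminatedKurtosis κ ε) (Set.Ici 0) := by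
  intro s hs t ht hst
  rw [Set.mem_Ici] at hs ht
  have hε₀ : 0 < ε := by linarith
  have hcoeff : 1 / ε - 3 + 3 * ε ≤ 3 * ε := by
    have hinv : 1 / ε ≤ 3 := by rw [div_le_iff₀ hε₀]; linarith
    linarith
  have hmem : ∀ r, 0 ≤ r → 1 / (1 + ε * r) ∈ Set.Icc (0 : ℝ) 1 := fun r hr ↦
    ⟨by positivity,
      div_le_one_of_le₀ (le_add_of_nonneg_right (mul_nonneg hε₀.le hr)) (by positivity)⟩
  have hw : 1 / (1 + ε * t) < 1 / (1 + ε * s) := by gcongr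
  exact div_lt_div_of_pos_right
    (strictMonoOn_bernstein_quadratic hcoeff hκ (hmem t ht) (hmem s hs) hw) (sub_pos.2 hε₁)

end Contamination

section RotationInvariance

open ProbabilityTheory

variable {E : Type*} [NormedAddCommGroup E] [InnerProductSpace ℝ E] [MeasurableSpace E]
  [BorelSpace E] {μ : Measure E} {u v e : E} {ε : ℝ}

/-- Invariance of a measure under every linear isometry of the space onto itself, reflections
included. -/
def IsRotationInvariant (μ : Measure E) : Prop :=
  ∀ T : E ≃ₗᵢ[ℝ] E, μ.map T = μ

theorem IsRotationInvariant.identDistrib_inner (hμ : IsRotationInvariant μ) (huv : ‖u‖ = ‖v‖) :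
    IdentDistrib (fun x ↦ ⟪u, x⟫) (fun x ↦ ⟪v, x⟫) μ μ where
  aemeasurable_fst := by fun_prop
  aemeasurable_snd := by fun_prop
  map_eq := by
    let T : E ≃ₗᵢ[ℝ] E := (ℝ ∙ (u - v))ᗮ.reflection
    have hT : (fun x ↦ ⟪v, x⟫) ∘ T = fun x ↦ ⟪u, x⟫ := by
      ext x
      rw [Function.comp_apply, ← Submodule.reflection_sub huv]
      exact T.inner_map_map u x
    conv_rhs => rw [← hμ T]
    rw [Measure.map_map (by fun_prop) T.continuous.measurable, hT]

theorem IsRotationInvariant.identDistrib_inner_neg (hμ : IsRotationInvariant μ) (u : E) :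
    IdentDistrib (fun x ↦ ⟪u, x⟫) (-fun x ↦ ⟪u, x⟫) μ μ := by
  have hneg := hμ.identDistrib_inner (norm_neg u).symm
  simp only [inner_neg_left] at hneg
  exact hneg

theorem IsRotationInvariant.kurtosis_inner (hμ : IsRotationInvariant μ) (u : E) :
    kurtosis (fun x ↦ ⟪u, x⟫) μ = (∫ x, ⟪u, x⟫ ^ 4 ∂μ) / (∫ x, ⟪u, x⟫ ^ 2 ∂μ) ^ 2 := by
  have hmean := integral_eq_zero_of_identDistrib_neg (hμ.identDistrib_inner_neg u)
  simp only [kurtosis, centralMoment_eq_moment_of_integral_eq_zero hmean, moment, Pi.pow_apply]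

theorem IsRotationInvariant.kurtosis_inner_pointContamination [IsProbabilityMeasure μ]
    (hμ : IsRotationInvariant μ) (hmom : MemLp (fun x ↦ ⟪e, x⟫) 4 μ)
    (hvar : centralMoment (fun x ↦ ⟪e, x⟫) 2 μ ≠ 0) (hε₀ : 0 < ε) (hε₁ : ε < 1)
    (hu : ‖u‖ = ‖e‖) (a : E) :
    kurtosis (fun x ↦ ⟪u, x⟫) (pointContamination μ ε a) =
      contaminatedKurtosis (kurtosis (fun x ↦ ⟪e, x⟫) μ) ε
        (⟪u, a⟫ ^ 2 / centralMoment (fun x ↦ ⟪e, x⟫) 2 μ) := by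
  have hue := hμ.identDistrib_inner hu
  have hsymm := hμ.identDistrib_inner_neg u
  have hcm (n : ℕ) := centralMoment_eq_of_identDistrib (n := n) hue
  rw [kurtosis_pointContamination (hue.memLp_iff.2 hmom) (by rwa [hcm])
    (centralMoment_eq_zero_of_identDistrib_neg hsymm (by decide)) hε₀ hε₁,
    integral_eq_zero_of_identDistrib_neg hsymm, sub_zero, kurtosis, kurtosis, hcm, hcm]

theorem contamination_direction_minimizes_kurtosis_general [IsProbabilityMeasure μ]
    (hμ : IsRotationInvariant μ) (he : ‖e‖ = 1) (hmom : MemLp (fun x ↦ ⟪e, x⟫) 4 μ)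
    (hε : 1 / 3 ≤ ε) (hε₁ : ε < 1) (hκ : 3 * ε < kurtosis (fun x ↦ ⟪e, x⟫) μ)
    {K : ℝ} (hK : K ≠ 0) (hu : ‖u‖ = 1) :
    kurtosis (fun x ↦ ⟪e, x⟫) (pointContamination μ ε (K • e)) ≤
        kurtosis (fun x ↦ ⟪u, x⟫) (pointContamination μ ε (K • e)) ∧
      (kurtosis (fun x ↦ ⟪u, x⟫) (pointContamination μ ε (K • e)) =
        kurtosis (fun x ↦ ⟪e, x⟫) (pointContamination μ ε (K • e)) ↔ ⟪e, u⟫ ^ 2 = 1) := by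
  set v := centralMoment (fun x ↦ ⟪e, x⟫) 2 μ with hv_def
  have hε₀ : 0 < ε := by linarith
  have hv : v ≠ 0 := fun h ↦ by
    have hκ₀ : kurtosis (fun x ↦ ⟪e, x⟫) μ = 0 := by simp [kurtosis, ← hv_def, h]
    linarith
  have hv₀ : 0 < v := lt_of_le_of_ne centralMoment_two_nonneg hv.symm
  have hanti := strictAntiOn_contaminatedKurtosis hε hε₁ hκ
  have hmem (r : ℝ) : r ^ 2 / v ∈ Set.Ici (0 : ℝ) := div_nonneg (sq_nonneg r) hv₀.le
  rw [hμ.kurtosis_inner_pointContamination hmom hv hε₀ hε₁ rfl,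
    hμ.kurtosis_inner_pointContamination hmom hv hε₀ hε₁ (hu.trans he.symm),
    hanti.le_iff_ge (hmem _) (hmem _), hanti.injOn.eq_iff (hmem _) (hmem _)]
  simp only [inner_smul_right, real_inner_self_eq_norm_sq, he, real_inner_comm e u]
  have hinner : ⟪e, u⟫ ^ 2 ≤ 1 := by simpa [he, hu] using abs_real_inner_le_norm e u
  constructor
  · gcongr ?_ / _
    simpa [mul_pow] using mul_le_of_le_one_right (sq_nonneg K) hinner
  · rw [div_left_inj' hv]
    simp [mul_pow, hK]

end RotationInvariance

/-- Under the point-mass contaminated model `F = (1−ε)F₀ + ε δ_{K e₁}` with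
`1/3 ≤ ε < 1/2` and `A > 3/2`, the kurtosis of the projection `⟪u, x⟫` under `F`, as `u`
ranges over unit vectors, attains its minimum exactly at the unit vectors with `u₁² = 1`
(i.e. at `±e₁`, the direction of the contamination). -/
theorem contamination_direction_minimizes_kurtosis {p : ℕ} (hp : 0 < p)
    (F₀ : Measure (EuclideanSpace ℝ (Fin p))) [IsProbabilityMeasure F₀]
    (hrot : ∀ T : EuclideanSpace ℝ (Fin p) ≃ₗᵢ[ℝ] EuclideanSpace ℝ (Fin p),
      Measure.map (⇑T) F₀ = F₀)
    (hmom : Integrable (fun x => ‖x‖ ^ 4) F₀)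
    (hcov : ∫ x, (x ⟨0, hp⟩) ^ 2 ∂F₀ = 1)
    (A : ℝ) (hA : A = ∫ x, (x ⟨0, hp⟩) ^ 4 ∂F₀) (hA2 : 3 / 2 < A)
    (ε K : ℝ) (hε3 : 1 / 3 ≤ ε) (hε2 : ε < 1 / 2) (hK : 0 < K)
    (F : Measure (EuclideanSpace ℝ (Fin p)))
    (hF : F = ENNReal.ofReal (1 - ε) • F₀ +
      ENNReal.ofReal ε • Measure.dirac (K • EuclideanSpace.single (⟨0, hp⟩ : Fin p) 1))
    (kurt : EuclideanSpace ℝ (Fin p) → ℝ)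
    (hkurt : ∀ v, kurt v =
      (∫ x, (⟪v, x⟫ - ∫ y, ⟪v, y⟫ ∂F) ^ 4 ∂F) /
        (∫ x, (⟪v, x⟫ - ∫ y, ⟪v, y⟫ ∂F) ^ 2 ∂F) ^ 2) :
    ∀ u : EuclideanSpace ℝ (Fin p), ‖u‖ = 1 →
      kurt (EuclideanSpace.single (⟨0, hp⟩ : Fin p) 1) ≤ kurt u ∧
      (kurt u = kurt (EuclideanSpace.single (⟨0, hp⟩ : Fin p) 1) ↔
        u ⟨0, hp⟩ ^ 2 = 1) := by
  subst hF
  have hμ : IsRotationInvariant F₀ := hrot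
  have hcoord (x : EuclideanSpace ℝ (Fin p)) :
      ⟪EuclideanSpace.single (⟨0, hp⟩ : Fin p) (1 : ℝ), x⟫ = x ⟨0, hp⟩ := by
    simp [EuclideanSpace.inner_single_left]
  have hmem : MemLp id 4 F₀ :=
    (integrable_norm_rpow_iff (by fun_prop) (by norm_num) (by norm_num)).1 (by simpa using hmom)
  have hkurtosis (v : EuclideanSpace ℝ (Fin p)) : kurt v = kurtosis (fun x ↦ ⟪v, x⟫)
      (pointContamination F₀ ε (K • EuclideanSpace.single (⟨0, hp⟩ : Fin p) 1)) := hkurt v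
  have hκ : kurtosis (fun x ↦ ⟪EuclideanSpace.single (⟨0, hp⟩ : Fin p) (1 : ℝ), x⟫) F₀ = A := by
    rw [hμ.kurtosis_inner]
    simp only [hcoord, hcov, ← hA, one_pow, div_one]
  intro u hu
  rw [hkurtosis, hkurtosis, ← hcoord]
  exact contamination_direction_minimizes_kurtosis_general hμ (by simp) (hmem.const_inner _)
    hε3 (by linarith) (by linarith) hK.ne' hu
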